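/- Let σ > 0, R_α ≥ 0, R_m ≥ 0, M_f ≥ 0, M_u ≥ 0. Let c ∈ ℝ with |c| ≤ M_f and let u ∈ ℝ³ with ‖u‖ ≤ M_u. Then for all b₁, b₂ ∈ ℝ³, ‖R_α c (Φ_σ(b₁) − Φ_σ(b₂)) + R_m (u × (b₁ − b₂))‖ ≤ (2 R_α M_f + R_m M_u) ‖b₁ − b₂‖, where × denotes the cross product on ℝ³. (This is the pointwise Lipschitz estimate for the dynamo nonlinearity G(B) = R_α f Φ_σ(B) + R_m (u × B) that underlies Lemma 3.4 of the paper.) -/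

import Mathlib

/-- The α-quenching map `Φ_σ : ℝ³ → ℝ³`, `Φ_σ(b) = (1 + σ‖b‖²)⁻¹ b`. -/
noncomputable def alphaQuench (σ : ℝ) (b : EuclideanSpace ℝ (Fin 3)) :
    EuclideanSpace ℝ (Fin 3) :=
  (1 + σ * ‖b‖ ^ 2)⁻¹ • b

/-- The standard cross product on ℝ³ (Euclidean space). -/
def cross3 (u v : EuclideanSpace ℝ (Fin 3)) : EuclideanSpace ℝ (Fin 3) :=
  WithLp.toLp 2 (crossProduct (u : Fin 3 → ℝ) (v : Fin 3 → ℝ))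

/-!
For vectors `x`, `y` of a real inner product space and real scalars `s`, `t`,
`‖s x - t y‖² = s t ‖x - y‖² + (s - t) (s ‖x‖² - t ‖y‖²)`.
For the quenching factors `s = (1 + σ‖x‖²)⁻¹`, `t = (1 + σ‖y‖²)⁻¹` one has `s t ≤ 1`, and the
last product is nonpositive because the factor decreases in the norm while its product with the
squared norm increases. Hence quenching does not expand distances, which improves the factor `2` of
the alpha term to `1`.
-/

open scoped RealInnerProductSpace

section Quenching

variable {E : Type*} [NormedAddCommGroup E] [InnerProductSpace ℝ E]

theorem norm_smul_sub_smul_sq (s t : ℝ) (x y : E) :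
    ‖s • x - t • y‖ ^ 2 =
      s * t * ‖x - y‖ ^ 2 + (s - t) * (s * ‖x‖ ^ 2 - t * ‖y‖ ^ 2) := by
  have inner_smul_smul : ⟪s • x, t • y⟫ = s * t * ⟪x, y⟫ := by
    rw [real_inner_smul_left, real_inner_smul_right, mul_assoc]
  rw [norm_sub_sq_real, norm_sub_sq_real, inner_smul_smul]
  simp only [norm_smul, mul_pow, Real.norm_eq_abs, sq_abs]
  ring

theorem norm_smul_sub_smul_le_norm_sub {s t : ℝ} {x y : E} (hst : s * t ≤ 1)
    (h : (s - t) * (s * ‖x‖ ^ 2 - t * ‖y‖ ^ 2) ≤ 0) :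
    ‖s • x - t • y‖ ≤ ‖x - y‖ := by
  refine le_of_sq_le_sq ?_ (norm_nonneg _)
  calc
    ‖s • x - t • y‖ ^ 2
        = s * t * ‖x - y‖ ^ 2 + (s - t) * (s * ‖x‖ ^ 2 - t * ‖y‖ ^ 2) :=
      norm_smul_sub_smul_sq s t x y
    _ ≤ s * t * ‖x - y‖ ^ 2 := add_le_of_nonpos_right h
    _ ≤ ‖x - y‖ ^ 2 := mul_le_of_le_one_left (sq_nonneg _) hst

theorem inv_one_add_mul_sub_mul_sub_nonpos {σ p q : ℝ} (hσ : 0 ≤ σ) (hp : 0 ≤ p) (hq : 0 ≤ q) :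
    ((1 + σ * p)⁻¹ - (1 + σ * q)⁻¹) * ((1 + σ * p)⁻¹ * p - (1 + σ * q)⁻¹ * q) ≤ 0 := by
  calc
    ((1 + σ * p)⁻¹ - (1 + σ * q)⁻¹) * ((1 + σ * p)⁻¹ * p - (1 + σ * q)⁻¹ * q)
        = -(σ * ((p - q) / ((1 + σ * p) * (1 + σ * q))) ^ 2) := by
      field_simp
      ring
    _ ≤ 0 := neg_nonpos.2 (mul_nonneg hσ (sq_nonneg _))

theorem lipschitzWith_one_inv_one_add_mul_norm_sq_smul {σ : ℝ} (hσ : 0 ≤ σ) :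
    LipschitzWith 1 fun x : E ↦ (1 + σ * ‖x‖ ^ 2)⁻¹ • x := by
  have factor_nonneg (x : E) : 0 ≤ (1 + σ * ‖x‖ ^ 2)⁻¹ := by positivity
  have factor_le_one (x : E) : (1 + σ * ‖x‖ ^ 2)⁻¹ ≤ 1 :=
    inv_le_one_of_one_le₀ (le_add_of_nonneg_right (by positivity))
  refine LipschitzWith.of_dist_le_mul fun x y ↦ ?_
  rw [dist_eq_norm, dist_eq_norm, NNReal.coe_one, one_mul]
  exact norm_smul_sub_smul_le_norm_sub
    (mul_le_one₀ (factor_le_one x) (factor_nonneg y) (factor_le_one y))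
    (inv_one_add_mul_sub_mul_sub_nonpos hσ (sq_nonneg _) (sq_nonneg _))

end Quenching

theorem norm_alphaQuench_sub_le {σ : ℝ} (hσ : 0 ≤ σ) (b₁ b₂ : EuclideanSpace ℝ (Fin 3)) :
    ‖alphaQuench σ b₁ - alphaQuench σ b₂‖ ≤ ‖b₁ - b₂‖ := by
  simpa only [alphaQuench, NNReal.coe_one, one_mul] using
    (lipschitzWith_one_inv_one_add_mul_norm_sq_smul hσ).norm_sub_le b₁ b₂

theorem norm_cross3_le (u v : EuclideanSpace ℝ (Fin 3)) : ‖cross3 u v‖ ≤ ‖u‖ * ‖v‖ := by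
  rw [cross3, InnerProductGeometry.norm_ofLp_crossProduct]
  exact mul_le_of_le_one_right (by positivity) (Real.sin_le_one _)

theorem dynamo_nonlinearity_lipschitz_general {σ Mf Mu c : ℝ} (Rα Rm : ℝ) (hσ : 0 ≤ σ)
    (hc : |c| ≤ Mf) {u : EuclideanSpace ℝ (Fin 3)} (hu : ‖u‖ ≤ Mu)
    (b₁ b₂ : EuclideanSpace ℝ (Fin 3)) :
    ‖(Rα * c) • (alphaQuench σ b₁ - alphaQuench σ b₂) + Rm • cross3 u (b₁ - b₂)‖
      ≤ (|Rα| * Mf + |Rm| * Mu) * ‖b₁ - b₂‖ := by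
  calc
    ‖(Rα * c) • (alphaQuench σ b₁ - alphaQuench σ b₂) + Rm • cross3 u (b₁ - b₂)‖
        ≤ |Rα| * |c| * ‖alphaQuench σ b₁ - alphaQuench σ b₂‖
          + |Rm| * ‖cross3 u (b₁ - b₂)‖ := by
      simpa only [norm_smul, Real.norm_eq_abs, abs_mul] using
        norm_add_le ((Rα * c) • (alphaQuench σ b₁ - alphaQuench σ b₂)) (Rm • cross3 u (b₁ - b₂))
    _ ≤ |Rα| * |c| * ‖b₁ - b₂‖ + |Rm| * (‖u‖ * ‖b₁ - b₂‖) := by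
      gcongr
      · exact norm_alphaQuench_sub_le hσ b₁ b₂
      · exact norm_cross3_le u (b₁ - b₂)
    _ ≤ |Rα| * Mf * ‖b₁ - b₂‖ + |Rm| * (Mu * ‖b₁ - b₂‖) := by gcongr
    _ = (|Rα| * Mf + |Rm| * Mu) * ‖b₁ - b₂‖ := by ring

theorem dynamo_nonlinearity_lipschitz
    (σ Rα Rm Mf Mu : ℝ) (hσ : 0 < σ) (hRα : 0 ≤ Rα) (hRm : 0 ≤ Rm)
    (hMf : 0 ≤ Mf) (hMu : 0 ≤ Mu)
    (c : ℝ) (hc : |c| ≤ Mf) (u : EuclideanSpace ℝ (Fin 3)) (hu : ‖u‖ ≤ Mu)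
    (b₁ b₂ : EuclideanSpace ℝ (Fin 3)) :
    ‖(Rα * c) • (alphaQuench σ b₁ - alphaQuench σ b₂) + Rm • cross3 u (b₁ - b₂)‖
      ≤ (2 * Rα * Mf + Rm * Mu) * ‖b₁ - b₂‖ := by
  refine (dynamo_nonlinearity_lipschitz_general Rα Rm hσ.le hc hu b₁ b₂).trans ?_
  rw [abs_of_nonneg hRα, abs_of_nonneg hRm]
  gcongr
  exact le_mul_of_one_le_left hRα one_le_two
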